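/- For every integers m ≥ 0 and n ≥ 0 there exists C_{m,n} > 0 such that for all k > 0 and all x with kx ≥ 1, |(d/dx)^m [e^{-ikx} H_n^{(1)}(kx)]| ≤ C_{m,n} (kx)^{-1/2} x^{-m}. -/

import Mathlib

open MeasureTheory
open MeasureTheory

/-- The Hankel function of the first kind of order `n`, for positive real
argument, via Watson's contour integral representation
`H_n^{(1)}(z) = (2/(πz))^{1/2} e^{i(z - nπ/2 - π/4)} / Γ(n-1/2)
  · ∫_0^∞ e^{-u} u^{n-1/2} (1 + iu/(2z))^{n-1/2} du`. -/
noncomputable def hankelH1 (n : ℕ) (z : ℝ) : ℂ :=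
  ((2 : ℂ) / ((Real.pi : ℂ) * (z : ℂ))) ^ ((1:ℂ)/2) *
    Complex.exp (Complex.I * ((z : ℂ) - (n : ℂ) * (Real.pi : ℂ) / 2 - (Real.pi : ℂ) / 4)) /
    Complex.Gamma ((n : ℂ) - 1/2) *
    ∫ u in Set.Ioi (0:ℝ),
      Complex.exp (-(u : ℂ)) * (u : ℂ) ^ ((n : ℂ) - 1/2) *
        (1 + Complex.I * (u : ℂ) / (2 * (z : ℂ))) ^ ((n : ℂ) - 1/2)

open Set Filter Topology

/-- The sector on which the amplitude is continued analytically. -/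
def sectV : Set ℂ := {z | 1/2 < z.re ∧ |z.im| < z.re}

lemma sectV_isOpen : IsOpen sectV := by
  refine (isOpen_lt continuous_const Complex.continuous_re).inter
    (isOpen_lt (Complex.continuous_im.abs) Complex.continuous_re)

lemma sectV_norm {z : ℂ} (hz : z ∈ sectV) : 1/2 < ‖z‖ :=
  lt_of_lt_of_le hz.1 (Complex.re_le_norm z)

lemma sectV_ne {z : ℂ} (hz : z ∈ sectV) : z ≠ 0 := by
  have := sectV_norm hz
  rw [← norm_pos_iff]; linarith

/-- the base of the power in the integrand -/
noncomputable def bas (z : ℂ) (u : ℝ) : ℂ := 1 + Complex.I * (u : ℂ) / (2 * z)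

lemma bas_eq {z : ℂ} (hz : z ≠ 0) (u : ℝ) : bas z u = (2 * z + Complex.I * u) / (2 * z) := by
  unfold bas; field_simp

lemma bas_lower {z : ℂ} (hz : z ∈ sectV) (u : ℝ) : 1/2 ≤ ‖bas z u‖ := by
  have h0 := sectV_ne hz
  have hp : 0 < ‖z‖ := norm_pos_iff.2 h0
  rw [bas_eq h0, norm_div, le_div_iff₀ (by simpa using h0), norm_mul, Complex.norm_two]
  have h1 : ‖z‖ ^ 2 = z.re ^ 2 + z.im ^ 2 := by
    rw [Complex.sq_norm, Complex.normSq_apply]; ring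
  have h2 : ‖2 * z + Complex.I * u‖ ^ 2 = (2 * z.re) ^ 2 + (2 * z.im + u) ^ 2 := by
    rw [Complex.sq_norm, Complex.normSq_apply]; simp; ring
  have h3 : z.im ^ 2 ≤ z.re ^ 2 := by
    rw [sq_le_sq]; exact hz.2.le.trans (le_abs_self _)
  have h4 : ‖z‖ ^ 2 ≤ ‖2 * z + Complex.I * u‖ ^ 2 := by
    rw [h1, h2]; nlinarith [sq_nonneg (2 * z.im + u), sq_nonneg z.re]
  have := (pow_le_pow_iff_left₀ (norm_nonneg _) (norm_nonneg _) two_ne_zero).1 h4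
  linarith

lemma bas_upper {z : ℂ} (hz : z ∈ sectV) {u : ℝ} (hu : 0 < u) : ‖bas z u‖ ≤ 1 + u := by
  have h0 := sectV_norm hz
  unfold bas
  refine (norm_add_le _ _).trans ?_
  have : ‖Complex.I * (u : ℂ) / (2 * z)‖ ≤ u := by
    rw [norm_div, norm_mul, norm_mul, Complex.norm_two, Complex.norm_I, Complex.norm_real,
      Real.norm_of_nonneg hu.le, div_le_iff₀ (by linarith)]
    nlinarith
  simpa using this

lemma bas_slit {z : ℂ} (hz : z ∈ sectV) {u : ℝ} (hu : 0 < u) : bas z u ∈ Complex.slitPlane := by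
  right
  have h0 := sectV_ne hz
  have : (bas z u).im = u * z.re / (2 * Complex.normSq z) := by
    have : bas z u = 1 + ((u / 2 : ℝ) : ℂ) * (Complex.I * z⁻¹) := by
      unfold bas; push_cast; field_simp
    rw [this]
    simp
    ring
  rw [this]
  have h1 : 0 < z.re := by linarith [hz.1]
  have h2 : 0 < Complex.normSq z := Complex.normSq_pos.2 h0
  positivity

lemma bas_pow {z : ℂ} (hz : z ∈ sectV) {u : ℝ} (hu : 0 < u) (n : ℕ) {b : ℝ} (hb : -2 ≤ b)
    (hbn : b ≤ n) : ‖bas z u ^ (b : ℂ)‖ ≤ 4 * (1 + u) ^ n := by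
  rw [Complex.norm_cpow_real]
  have hl := bas_lower hz u
  have hU := bas_upper hz hu
  have h1 : (1:ℝ) ≤ (1 + u) ^ n := one_le_pow₀ (by linarith)
  rcases le_total 0 b with h | h
  · have : ‖bas z u‖ ^ b ≤ (1 + u) ^ n := by
      calc ‖bas z u‖ ^ b ≤ (1 + u) ^ b := Real.rpow_le_rpow (norm_nonneg _) hU h
        _ ≤ (1 + u) ^ (n : ℝ) := Real.rpow_le_rpow_of_exponent_le (by linarith) hbn
        _ = _ := Real.rpow_natCast _ _
    linarith
  · have : ‖bas z u‖ ^ b ≤ 4 := by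
      calc ‖bas z u‖ ^ b ≤ (1 / 2 : ℝ) ^ b := Real.rpow_le_rpow_of_nonpos (by norm_num) hl h
        _ ≤ (1 / 2 : ℝ) ^ (-2 : ℝ) :=
          Real.rpow_le_rpow_of_exponent_ge (by norm_num) (by norm_num) hb
        _ = 4 := by
          rw [Real.rpow_neg (by norm_num)]; norm_num
    linarith

/-- dominating function -/
noncomputable def domB (a : ℝ) (N : ℕ) (u : ℝ) : ℝ := Real.exp (-u) * u ^ a * (1 + u) ^ N

lemma domB_integrable {a : ℝ} (ha : -1 < a) (N : ℕ) : IntegrableOn (domB a N) (Ioi 0) := by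
  have h := (integrableOn_rpow_mul_exp_neg_mul_rpow (p := 1) (b := 1/2) ha (by norm_num)
    (by norm_num)).const_mul (Nat.factorial N * 2 ^ N * Real.exp (1/2))
  refine Integrable.mono' h ?_ ?_
  · refine ContinuousOn.aestronglyMeasurable ?_ measurableSet_Ioi
    unfold domB
    refine ContinuousOn.mul (ContinuousOn.mul (by fun_prop) ?_) (by fun_prop)
    exact fun u hu => (Real.continuousAt_rpow_const u a (Or.inl (ne_of_gt hu))).continuousWithinAt
  · refine (ae_restrict_iff' measurableSet_Ioi).2 (Eventually.of_forall fun u hu => ?_)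
    have hu : 0 < u := hu
    unfold domB
    rw [Real.norm_of_nonneg (by positivity), Real.rpow_one]
    have h1 := Real.pow_div_factorial_le_exp (x := (1 + u) / 2) (by positivity) N
    rw [div_le_iff₀ (by positivity), div_pow, div_le_iff₀ (by positivity)] at h1
    have h2 : Real.exp ((1 + u) / 2) = Real.exp (1/2) * Real.exp (u/2) := by
      rw [← Real.exp_add]; ring_nf
    have h3 : Real.exp (-u) * Real.exp (u/2) = Real.exp (-(1/2) * u) := by
      rw [← Real.exp_add]; ring_nf
    calc _ ≤ Real.exp (-u) * u ^ a * (Real.exp ((1 + u) / 2) * (N.factorial : ℝ) * 2 ^ N) := by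
          gcongr
      _ = _ := by rw [h2, ← h3]; ring

/-- the integrand -/
noncomputable def intF (a : ℝ) (z : ℂ) (u : ℝ) : ℂ :=
  Complex.exp (-(u : ℂ)) * (u : ℂ) ^ (a : ℂ) * bas z u ^ (a : ℂ)

/-- its derivative -/
noncomputable def intF' (a : ℝ) (z : ℂ) (u : ℝ) : ℂ :=
  Complex.exp (-(u : ℂ)) * (u : ℂ) ^ (a : ℂ) *
    ((a : ℂ) * bas z u ^ ((a : ℂ) - 1) * (-(Complex.I * u) / (2 * z ^ 2)))

lemma norm_pre (a : ℝ) {u : ℝ} (hu : 0 < u) :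
    ‖Complex.exp (-(u : ℂ)) * (u : ℂ) ^ (a : ℂ)‖ = Real.exp (-u) * u ^ a := by
  rw [norm_mul, Complex.norm_cpow_real, Complex.norm_exp, Complex.norm_real,
    Real.norm_of_nonneg hu.le]
  simp

lemma intF_bound {n : ℕ} {a : ℝ} (ha : -1 ≤ a) (han : a ≤ n) {z : ℂ} (hz : z ∈ sectV) {u : ℝ}
    (hu : 0 < u) : ‖intF a z u‖ ≤ 4 * domB a n u := by
  unfold intF domB
  rw [norm_mul, norm_pre a hu]
  have := bas_pow hz hu n (b := a) (by linarith) han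
  calc _ ≤ Real.exp (-u) * u ^ a * (4 * (1 + u) ^ n) := by gcongr
    _ = _ := by ring

lemma intF'_bound {n : ℕ} {a : ℝ} (ha : -1 ≤ a) (han : a ≤ n) {z : ℂ} (hz : z ∈ sectV) {u : ℝ}
    (hu : 0 < u) : ‖intF' a z u‖ ≤ 8 * |a| * domB a (n + 1) u := by
  unfold intF' domB
  have h0 := sectV_norm hz
  rw [norm_mul, norm_pre a hu, norm_mul, norm_mul, Complex.norm_real, Real.norm_eq_abs]
  have h1 := bas_pow hz hu n (b := a - 1) (by linarith) (by linarith)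
  push_cast at h1
  have h2 : ‖-(Complex.I * u) / (2 * z ^ 2)‖ ≤ 2 * (1 + u) := by
    rw [norm_div, norm_neg, norm_mul, norm_mul, norm_pow, Complex.norm_two, Complex.norm_I,
      Complex.norm_real, Real.norm_of_nonneg hu.le, div_le_iff₀ (by positivity)]
    have : 1/4 ≤ ‖z‖ ^ 2 := by nlinarith
    nlinarith
  calc _ ≤ Real.exp (-u) * u ^ a * (|a| * (4 * (1 + u) ^ n) * (2 * (1 + u))) := by gcongr
    _ = _ := by ring

lemma intF_hasDeriv (a : ℝ) {z : ℂ} (hz : z ∈ sectV) {u : ℝ} (hu : 0 < u) :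
    HasDerivAt (fun w => intF a w u) (intF' a z u) z := by
  have h0 := sectV_ne hz
  have h1 : HasDerivAt (fun w => bas w u) (-(Complex.I * u) / (2 * z ^ 2)) z := by
    have h := ((hasDerivAt_inv h0).const_mul (Complex.I * u / 2)).const_add 1
    have e : (fun w => bas w u) = fun w => 1 + Complex.I * u / 2 * w⁻¹ := by
      funext w; unfold bas; rw [div_mul_eq_div_div, div_eq_mul_inv _ w]
    rw [e]
    have e2 : -(Complex.I * u) / (2 * z ^ 2) = Complex.I * u / 2 * -(z ^ 2)⁻¹ := by
      field_simp
    rw [e2]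
    exact h
  exact (h1.cpow_const (bas_slit hz hu)).const_mul _

lemma pre_cont (a : ℝ) : ContinuousOn
    (fun u : ℝ => Complex.exp (-(u : ℂ)) * (u : ℂ) ^ (a : ℂ)) (Ioi 0) := by
  refine ContinuousOn.mul (by fun_prop) ?_
  refine ContinuousOn.cpow_const (by fun_prop) ?_
  intro u hu
  exact Complex.ofReal_mem_slitPlane.2 hu

lemma bas_cont {z : ℂ} (hz : z ∈ sectV) (b : ℂ) :
    ContinuousOn (fun u : ℝ => bas z u ^ b) (Ioi 0) := by
  refine ContinuousOn.cpow_const ?_ fun u hu => bas_slit hz hu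
  unfold bas; fun_prop

lemma intF_meas (a : ℝ) {z : ℂ} (hz : z ∈ sectV) :
    AEStronglyMeasurable (intF a z) (volume.restrict (Ioi 0)) :=
  ((pre_cont a).mul (bas_cont hz _)).aestronglyMeasurable measurableSet_Ioi

lemma intF'_meas (a : ℝ) {z : ℂ} (hz : z ∈ sectV) :
    AEStronglyMeasurable (intF' a z) (volume.restrict (Ioi 0)) := by
  refine ContinuousOn.aestronglyMeasurable ((pre_cont a).mul ?_) measurableSet_Ioi
  exact (continuousOn_const.mul (bas_cont hz _)).mul (by fun_prop)

lemma int_diff {n : ℕ} {a : ℝ} (ha : -1 < a) (han : a ≤ n) :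
    DifferentiableOn ℂ (fun z => ∫ u in Ioi (0:ℝ), intF a z u) sectV := by
  intro z hz
  have hV := sectV_isOpen.mem_nhds hz
  refine (hasDerivAt_integral_of_dominated_loc_of_deriv_le (F' := intF' a)
    (bound := fun u => 8 * |a| * domB a (n + 1) u) hV ?_ ?_ ?_ ?_ ?_ ?_).2.differentiableAt.differentiableWithinAt
  · filter_upwards [hV] with w hw using intF_meas a hw
  · refine Integrable.mono' ((domB_integrable ha n).const_mul 4) (intF_meas a hz) ?_
    exact (ae_restrict_iff' measurableSet_Ioi).2
      (Eventually.of_forall fun u hu => intF_bound ha.le han hz hu)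
  · exact intF'_meas a hz
  · exact (ae_restrict_iff' measurableSet_Ioi).2
      (Eventually.of_forall fun u hu w hw => intF'_bound ha.le han hw hu)
  · exact (domB_integrable ha (n + 1)).const_mul _
  · exact (ae_restrict_iff' measurableSet_Ioi).2
      (Eventually.of_forall fun u hu w hw => intF_hasDeriv a hw hu)

lemma int_bound {n : ℕ} {a : ℝ} (ha : -1 < a) (han : a ≤ n) {z : ℂ} (hz : z ∈ sectV) :
    ‖∫ u in Ioi (0:ℝ), intF a z u‖ ≤ ∫ u in Ioi (0:ℝ), 4 * domB a n u := by
  refine norm_integral_le_of_norm_le ((domB_integrable ha n).const_mul 4) ?_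
  exact (ae_restrict_iff' measurableSet_Ioi).2
      (Eventually.of_forall fun u hu => intF_bound ha.le han hz hu)

/-- the full amplitude -/
noncomputable def amp (a : ℝ) (z : ℂ) : ℂ :=
  ((2 : ℂ) / ((Real.pi : ℂ) * z)) ^ ((1:ℂ)/2) * ∫ u in Ioi (0:ℝ), intF a z u

lemma amp_diff {n : ℕ} {a : ℝ} (ha : -1 < a) (han : a ≤ n) :
    DifferentiableOn ℂ (amp a) sectV := by
  refine DifferentiableOn.mul ?_ (int_diff ha han)
  intro z hz
  have h0 := sectV_ne hz
  have hpi : (Real.pi : ℂ) ≠ 0 := Complex.ofReal_ne_zero.2 Real.pi_ne_zero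
  refine DifferentiableAt.differentiableWithinAt ?_
  refine DifferentiableAt.cpow_const ?_ ?_
  · exact (differentiableAt_const _).div (by fun_prop) (mul_ne_zero hpi h0)
  · left
    have : (2 : ℂ) / ((Real.pi : ℂ) * z) = ((2 / Real.pi : ℝ) : ℂ) * z⁻¹ := by
      push_cast; field_simp
    rw [this, Complex.re_ofReal_mul, Complex.inv_re]
    have h1 : 0 < z.re := by linarith [hz.1]
    have h2 : 0 < Complex.normSq z := Complex.normSq_pos.2 h0
    positivity

lemma iter_ofReal {U : Set ℂ} (hU : IsOpen U) (m : ℕ) : ∀ {h : ℂ → ℂ},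
    DifferentiableOn ℂ h U → ∀ x : ℝ, (x : ℂ) ∈ U →
      iteratedDeriv m (fun y : ℝ => h y) x = iteratedDeriv m h x := by
  induction m with
  | zero => intro h _ x _; simp
  | succ m ih =>
    intro h hd x hx
    rw [iteratedDeriv_succ', iteratedDeriv_succ', ← ih (hd.deriv hU) x hx]
    apply Filter.EventuallyEq.iteratedDeriv_eq
    have : ∀ᶠ y : ℝ in 𝓝 x, (y : ℂ) ∈ U :=
      Complex.continuous_ofReal.continuousAt.eventually (hU.mem_nhds hx)
    filter_upwards [this] with y hy
    exact ((hd.differentiableAt (hU.mem_nhds hy)).hasDerivAt.comp_ofReal).deriv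

lemma mem_sect {k x : ℝ} (hk : 0 < k) (hx : 1 ≤ k * x) {w : ℂ}
    (hw : w ∈ Metric.closedBall (x : ℂ) (x / 4)) : (k : ℂ) * w ∈ sectV ∧ k * x / 2 ≤ ‖(k : ℂ) * w‖ := by
  rw [mem_closedBall_iff_norm] at hw
  have h1 := (Complex.abs_re_le_norm (w - x)).trans hw
  have h2 := (Complex.abs_im_le_norm (w - x)).trans hw
  simp only [Complex.sub_re, Complex.sub_im, Complex.ofReal_re, Complex.ofReal_im, sub_zero] at h1 h2
  have h3 := (abs_le.1 h1).1
  have hxp : 0 < x := pos_of_mul_pos_right (by linarith) hk.le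
  have h4 : k * (3 / 4 * x) ≤ k * w.re := by gcongr; linarith
  have h5 : (k * w).re = k * w.re := Complex.re_ofReal_mul _ _
  have h6 : (k * w).im = k * w.im := Complex.im_ofReal_mul _ _
  refine ⟨⟨?_, ?_⟩, ?_⟩
  · rw [h5]; linarith
  · rw [h5, h6, abs_mul, abs_of_pos hk]
    gcongr; linarith
  · refine le_trans ?_ (Complex.re_le_norm _)
    rw [h5]; linarith

lemma sqrt_bound {t : ℝ} (ht : 0 < t) {z : ℂ} (hz : t / 2 ≤ ‖z‖) :
    ‖((2 : ℂ) / ((Real.pi : ℂ) * z)) ^ ((1:ℂ)/2)‖ ≤ 2 * t ^ (-(1:ℝ)/2) := by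
  have e : ((1:ℂ)/2) = ((1/2 : ℝ) : ℂ) := by push_cast; rfl
  rw [e, Complex.norm_cpow_real, norm_div, norm_mul, Complex.norm_two, Complex.norm_real,
    Real.norm_of_nonneg Real.pi_pos.le]
  have h1 : 2 / (Real.pi * ‖z‖) ≤ 4 * t⁻¹ := by
    rw [← div_eq_mul_inv]
    have hz' : 0 < ‖z‖ := by linarith
    rw [div_le_div_iff₀ (by positivity) ht]
    nlinarith [Real.pi_gt_three]
  calc _ ≤ (4 * t⁻¹) ^ (1/2 : ℝ) := Real.rpow_le_rpow (by positivity) h1 (by norm_num)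
    _ = 2 * t ^ (-(1:ℝ)/2) := by
      rw [Real.mul_rpow (by norm_num) (by positivity), Real.inv_rpow ht.le, ← Real.rpow_neg ht.le,
        show (4:ℝ) = 2 ^ (2:ℝ) by norm_num, ← Real.rpow_mul (by norm_num)]
      norm_num

lemma hankel_eq (n : ℕ) : ∃ c : ℂ, ∀ k y : ℝ,
    Complex.exp (-Complex.I * (k : ℂ) * (y : ℂ)) * hankelH1 n (k * y) =
      c * amp ((n:ℝ) - 1/2) ((k : ℂ) * (y : ℂ)) := by
  refine ⟨Complex.exp (Complex.I * (-(n : ℂ) * (Real.pi : ℂ) / 2 - (Real.pi : ℂ) / 4)) /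
    Complex.Gamma ((n : ℂ) - 1/2), fun k y => ?_⟩
  unfold hankelH1 amp intF bas
  push_cast
  have : Complex.exp (Complex.I * ((k:ℂ) * y - (n : ℂ) * (Real.pi : ℂ) / 2 - (Real.pi : ℂ) / 4)) =
    Complex.exp (Complex.I * k * y) *
      Complex.exp (Complex.I * (-(n : ℂ) * (Real.pi : ℂ) / 2 - (Real.pi : ℂ) / 4)) := by
    rw [← Complex.exp_add]; ring_nf
  rw [this]
  have h2 : Complex.exp (-Complex.I * (k : ℂ) * (y : ℂ)) * Complex.exp (Complex.I * k * y) = 1 := by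
    rw [← Complex.exp_add, ← Complex.exp_zero]; ring_nf
  linear_combination (((2 : ℂ) / ((Real.pi : ℂ) * (k * y))) ^ ((1:ℂ)/2) *
      Complex.exp (Complex.I * (-(n : ℂ) * (Real.pi : ℂ) / 2 - (Real.pi : ℂ) / 4)) /
    Complex.Gamma ((n : ℂ) - 1/2) *
    ∫ u in Set.Ioi (0:ℝ),
      Complex.exp (-(u : ℂ)) * (u : ℂ) ^ ((n : ℂ) - 1/2) *
        (1 + Complex.I * (u : ℂ) / (2 * (k * y))) ^ ((n : ℂ) - 1/2)) * h2

/-- Away-from-origin smoothness estimate for the non-oscillatory part of the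
Hankel kernel: for `kx ≥ 1`,
`|(d/dx)^m [e^{-ikx} H_n^{(1)}(kx)]| ≤ C_{m,n} (kx)^{-1/2} x^{-m}`, uniformly in `k`. -/
theorem stmt6 (m n : ℕ) :
    ∃ C > 0, ∀ k x : ℝ, 0 < k → 1 ≤ k * x →
      ‖iteratedDeriv m (fun y : ℝ =>
          Complex.exp (-Complex.I * (k : ℂ) * (y : ℂ)) * hankelH1 n (k * y)) x‖ ≤
        C * (k * x) ^ (-(1:ℝ)/2) * x ^ (-(m : ℝ)) := by
  obtain ⟨c, hc⟩ := hankel_eq n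
  set a : ℝ := (n:ℝ) - 1/2 with ha_def
  have ha : -1 < a := by
    have : (0:ℝ) ≤ n := Nat.cast_nonneg n
    rw [ha_def]; linarith
  have han : a ≤ n := by rw [ha_def]; linarith
  set J : ℝ := ∫ u in Ioi (0:ℝ), 4 * domB a n u with hJ
  have hJ0 : 0 ≤ J := by
    refine setIntegral_nonneg measurableSet_Ioi fun u hu => ?_
    have hu : 0 < u := hu
    unfold domB; positivity
  refine ⟨m.factorial * (‖c‖ * (2 * J)) * 4 ^ m + 1, by positivity, fun k x hk hx => ?_⟩
  have hxp : 0 < x := pos_of_mul_pos_right (by linarith) hk.le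
  have ht : 0 < k * x := by linarith
  set U : Set ℂ := (fun w : ℂ => (k : ℂ) * w) ⁻¹' sectV with hU
  have hUo : IsOpen U := sectV_isOpen.preimage (by fun_prop)
  set h : ℂ → ℂ := fun w => c * amp a ((k : ℂ) * w) with hh
  have hd : DifferentiableOn ℂ h U := by
    refine DifferentiableOn.const_mul ?_ c
    exact (amp_diff ha han).comp (by fun_prop) fun w hw => hw
  have hball : Metric.closedBall (x : ℂ) (x / 4) ⊆ U := fun w hw => (mem_sect hk hx hw).1
  have hxU : (x : ℂ) ∈ U := hball (Metric.mem_closedBall_self (by positivity))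
  have hfun : (fun y : ℝ => Complex.exp (-Complex.I * (k : ℂ) * (y : ℂ)) * hankelH1 n (k * y)) =
      fun y : ℝ => h y := by
    funext y; exact hc k y
  rw [hfun, iter_ofReal hUo m hd x hxU]
  have hs : ∀ w ∈ Metric.sphere (x : ℂ) (x / 4), ‖h w‖ ≤
      ‖c‖ * (2 * (k * x) ^ (-(1:ℝ)/2) * J) := by
    intro w hw
    obtain ⟨h1, h2⟩ := mem_sect hk hx (Metric.sphere_subset_closedBall hw)
    rw [hh]
    simp only [amp, norm_mul c]
    rw [norm_mul]
    gcongr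
    · exact sqrt_bound ht h2
    · exact int_bound ha han h1
  have hdc : DiffContOnCl ℂ h (Metric.ball (x : ℂ) (x / 4)) :=
    (hd.mono hball).diffContOnCl_ball subset_rfl
  have hC := Complex.norm_iteratedDeriv_le_of_forall_mem_sphere_norm_le m
    (by positivity : 0 < x / 4) hdc hs
  refine hC.trans ?_
  have hX : x ^ (-(m : ℝ)) = (x ^ m)⁻¹ := by
    rw [Real.rpow_neg hxp.le, Real.rpow_natCast]
  rw [hX]
  set T := (k * x) ^ (-(1:ℝ)/2) with hT
  have hT0 : 0 < T := Real.rpow_pos_of_pos ht _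
  calc _ = (m.factorial * (‖c‖ * (2 * J)) * 4 ^ m) * T * (x ^ m)⁻¹ := by
        rw [div_pow]; field_simp
    _ ≤ _ := by gcongr; linarith
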